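/- arXiv:1903.11939 — 2 statements merged into one kernel-verified Lean document; each statement's English description precedes it below -/
import Mathlib

section
/- Let 0 < α < 1, t > 0 and x > 0. Then the function ξ ↦ E_α((1−ξ²) t^α) cos(xξ) is integrable on (0,∞), the alternating series ∑_{k=0}^∞ (−1)^k a_k(x,t) converges, and ∫_0^∞ E_α((1−ξ²) t^α) cos(xξ) dξ = ∑_{k=0}^∞ (−1)^k a_k(x,t). -/
open Real MeasureTheory

/-- The Mittag-Leffler function `E_α(r) = ∑ r^k / Γ(1+kα)`. -/
noncomputable def mittagLeffler (α r : ℝ) : ℝ :=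
  ∑' k : ℕ, r ^ k / Real.Gamma (1 + k * α)

/-- The coefficients `a_k(x,t)` obtained by splitting the Fourier integral of the
fundamental solution over the intervals where `cos (xξ)` has a fixed sign. -/
noncomputable def aCoeff (α t x : ℝ) (k : ℕ) : ℝ :=
  if k = 0 then
    ∫ ξ in (0 : ℝ)..(π / (2 * x)),
      mittagLeffler α ((1 - ξ ^ 2) * t ^ α) * Real.cos (x * ξ)
  else
    (-1 : ℝ) ^ k *
      ∫ ξ in (π * (2 * (k : ℝ) - 1) / (2 * x))..(π * (2 * (k : ℝ) + 1) / (2 * x)),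
        mittagLeffler α ((1 - ξ ^ 2) * t ^ α) * Real.cos (x * ξ)

/-- The kernel `s ^ (b - 1) / Γ(b)` of the Riemann–Liouville fractional integral of order `b`. -/
noncomputable def fracKernel (b s : ℝ) : ℝ := s ^ (b - 1) / Real.Gamma b

/-- The two-parameter Mittag-Leffler function `E_{α,b}(r) = ∑ r^k / Γ(b+kα)`. -/
noncomputable def mittagLefflerTwo (α b r : ℝ) : ℝ :=
  ∑' k : ℕ, r ^ k / Real.Gamma (b + k * α)

/-- The function `s ^ (b - 1) * E_{α,b}(-s^α)`, which solves the Volterra equation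
`v = fracKernel b - fracKernel α * v` (with `*` the convolution on `(0, ∞)`). -/
noncomputable def volterraSol (α b s : ℝ) : ℝ :=
  s ^ (b - 1) * mittagLefflerTwo α b (-s ^ α)

lemma fracKernel_pos {b s : ℝ} (hb : 0 < b) (hs : 0 < s) : 0 < fracKernel b s :=
  div_pos (rpow_pos_of_pos hs _) (Real.Gamma_pos_of_pos hb)

lemma fracKernel_nonneg {b s : ℝ} (hb : 0 < b) (hs : 0 ≤ s) : 0 ≤ fracKernel b s :=
  div_nonneg (rpow_nonneg hs _) (Real.Gamma_pos_of_pos hb).le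

lemma fracKernel_one (s : ℝ) : fracKernel 1 s = 1 := by simp [fracKernel]

lemma integral_fracKernel_mul_fracKernel {a b t : ℝ} (ha : 0 < a) (hb : 0 < b) (ht : 0 < t) :
    ∫ s in Set.Ioc 0 t, fracKernel a (t - s) * fracKernel b s = fracKernel (a + b) t := by
  have h := Complex.betaIntegral_scaled b a ht
  rw [Complex.betaIntegral_eq_Gamma_mul_div _ _ (by simpa) (by simpa),
    intervalIntegral.integral_of_le ht.le] at h
  have h2 : ∫ s in Set.Ioc 0 t, s ^ (b - 1) * (t - s) ^ (a - 1)
      = t ^ (b + a - 1) * (Real.Gamma b * Real.Gamma a / Real.Gamma (b + a)) := by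
    apply Complex.ofReal_injective
    rw [← integral_complex_ofReal]
    push_cast [Complex.ofReal_cpow ht.le]
    simp only [← Complex.Gamma_ofReal, Complex.ofReal_add]
    rw [← h]
    refine setIntegral_congr_fun measurableSet_Ioc fun s hs => ?_
    rw [Complex.ofReal_cpow hs.1.le, Complex.ofReal_cpow (sub_nonneg.2 hs.2)]
    push_cast
    rfl
  have hΓa := (Real.Gamma_pos_of_pos ha).ne'
  have hΓb := (Real.Gamma_pos_of_pos hb).ne'
  calc ∫ s in Set.Ioc 0 t, fracKernel a (t - s) * fracKernel b s
      = ∫ s in Set.Ioc 0 t, (Real.Gamma a * Real.Gamma b)⁻¹ * (s ^ (b - 1) * (t - s) ^ (a - 1)) := by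
        congr 1 with s
        simp only [fracKernel]
        field_simp
    _ = fracKernel (a + b) t := by
        rw [integral_const_mul, h2, fracKernel, add_comm b a]
        field_simp

lemma integrableOn_fracKernel_mul_fracKernel {a b t : ℝ} (ha : 0 < a) (hb : 0 < b) (ht : 0 < t) :
    IntegrableOn (fun s => fracKernel a (t - s) * fracKernel b s) (Set.Ioc 0 t) := by
  refine Integrable.of_integral_ne_zero ?_
  rw [integral_fracKernel_mul_fracKernel ha hb ht]
  exact (fracKernel_pos (add_pos ha hb) ht).ne'

lemma rpow_mul_exp_neg_le_Gamma {M y : ℝ} (hM : 0 < M) (hy : 1 ≤ y) :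
    M ^ (y - 1) * Real.exp (-M) ≤ Real.Gamma y := by
  have hint := Real.GammaIntegral_convergent (zero_lt_one.trans_le hy)
  rw [Real.Gamma_eq_integral (zero_lt_one.trans_le hy)]
  have hsub : Set.Ioi M ⊆ Set.Ioi 0 := Set.Ioi_subset_Ioi hM.le
  calc M ^ (y - 1) * Real.exp (-M) = ∫ s in Set.Ioi M, Real.exp (-s) * M ^ (y - 1) := by
        rw [integral_mul_const, integral_exp_neg_Ioi, mul_comm]
    _ ≤ ∫ s in Set.Ioi M, Real.exp (-s) * s ^ (y - 1) := by
        refine setIntegral_mono_on ?_ (hint.mono_set hsub) measurableSet_Ioi fun s hs => ?_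
        · exact (integrableOn_exp_neg_Ioi M).mul_const _
        · have : 0 ≤ y - 1 := by linarith
          have hs' : M ≤ s := le_of_lt hs
          gcongr
    _ ≤ ∫ s in Set.Ioi 0, Real.exp (-s) * s ^ (y - 1) := by
        refine setIntegral_mono_set hint ?_ hsub.eventuallyLE
        filter_upwards [ae_restrict_mem measurableSet_Ioi] with s hs
        exact mul_nonneg (Real.exp_pos _).le (rpow_nonneg (le_of_lt hs) _)

lemma summable_pow_div_Gamma {α b : ℝ} (hα : 0 < α) (hb : 0 < b) (r : ℝ) :
    Summable fun k : ℕ => r ^ k / Real.Gamma (b + k * α) := by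
  set M : ℝ := (2 * |r| + 1) ^ α⁻¹ with hMdef
  have hM : 0 < M := by positivity
  have hMα : M ^ α = 2 * |r| + 1 := by
    rw [hMdef, ← rpow_mul (by positivity), inv_mul_cancel₀ hα.ne', rpow_one]
  refine Summable.of_norm_bounded_eventually_nat
    (g := fun k : ℕ => Real.exp M * M ^ (1 - b) * (1 / 2 : ℝ) ^ k)
    (summable_geometric_two.mul_left _) ?_
  filter_upwards [Filter.eventually_ge_atTop ⌈α⁻¹⌉₊] with k hk
  have hk' : 1 ≤ k * α := by
    rw [← inv_mul_cancel₀ hα.ne']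
    gcongr
    exact Nat.ceil_le.1 hk
  have hΓ := rpow_mul_exp_neg_le_Gamma hM (y := b + k * α) (by linarith)
  have hpos : 0 < M ^ (b + k * α - 1) * Real.exp (-M) := by positivity
  rw [norm_div, norm_pow, Real.norm_eq_abs, Real.norm_of_nonneg (hpos.le.trans hΓ)]
  have hq : |r| ^ k ≤ (1 / 2 : ℝ) ^ k * M ^ (k * α) := by
    rw [mul_comm (k : ℝ) α, rpow_mul hM.le, hMα, rpow_natCast, ← mul_pow]
    gcongr
    linarith
  calc |r| ^ k / Real.Gamma (b + k * α)
      ≤ ((1 / 2 : ℝ) ^ k * M ^ (k * α)) / (M ^ (b + k * α - 1) * Real.exp (-M)) := by gcongr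
    _ = Real.exp M * M ^ (1 - b) * (1 / 2 : ℝ) ^ k := by
        rw [show b + k * α - 1 = k * α - (1 - b) by ring, rpow_sub hM, Real.exp_neg]
        field_simp

lemma continuous_mittagLefflerTwo {α b : ℝ} (hα : 0 < α) (hb : 0 < b) :
    Continuous (mittagLefflerTwo α b) := by
  refine continuous_iff_continuousAt.2 fun r => ?_
  have hnhds : Set.Icc (-(|r| + 1)) (|r| + 1) ∈ nhds r :=
    Icc_mem_nhds (by linarith [neg_abs_le r]) (by linarith [le_abs_self r])
  refine ContinuousOn.continuousAt ?_ hnhds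
  refine continuousOn_tsum (fun k => by fun_prop) (summable_pow_div_Gamma hα hb (|r| + 1)) ?_
  intro k s hs
  have hΓ : 0 < Real.Gamma (b + k * α) := Real.Gamma_pos_of_pos (by positivity)
  rw [norm_div, norm_pow, Real.norm_eq_abs, Real.norm_of_nonneg hΓ.le]
  gcongr
  exact abs_le.2 hs

lemma mittagLefflerTwo_zero (α b : ℝ) : mittagLefflerTwo α b 0 = (Real.Gamma b)⁻¹ := by
  rw [mittagLefflerTwo, tsum_eq_single 0 (fun k hk => by simp [hk])]
  simp

lemma neg_one_pow_mul_fracKernel {α b s : ℝ} (hs : 0 < s) (k : ℕ) :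
    (-1) ^ k * fracKernel (b + k * α) s
      = s ^ (b - 1) * ((-s ^ α) ^ k / Real.Gamma (b + k * α)) := by
  rw [fracKernel, show b + k * α - 1 = (b - 1) + α * k by ring, rpow_add hs, rpow_mul hs.le,
    rpow_natCast, neg_pow (s ^ α)]
  ring

lemma hasSum_volterraSol {α b s : ℝ} (hα : 0 < α) (hb : 0 < b) (hs : 0 < s) :
    HasSum (fun k : ℕ => (-1) ^ k * fracKernel (b + k * α) s) (volterraSol α b s) := by
  simp only [neg_one_pow_mul_fracKernel hs]
  exact (summable_pow_div_Gamma hα hb _).hasSum.mul_left _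

lemma volterraSol_eq_sub {α b s : ℝ} (hα : 0 < α) (hb : 0 < b) (hs : 0 < s) :
    volterraSol α b s = fracKernel b s - volterraSol α (α + b) s := by
  have h := hasSum_volterraSol hα hb hs
  rw [← hasSum_nat_add_iff' 1] at h
  have h' := (hasSum_volterraSol hα (add_pos hα hb) hs).neg
  have := h.unique (h'.congr_fun fun k => ?_)
  · simp at this
    linarith
  · push_cast
    rw [show b + (k + 1) * α = α + b + k * α by ring]
    ring

lemma continuousOn_volterraSol {α b : ℝ} (hα : 0 < α) (hb : 0 < b) :
    ContinuousOn (volterraSol α b) (Set.Ioi 0) := by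
  have hc : Continuous fun s : ℝ => mittagLefflerTwo α b (-s ^ α) :=
    (continuous_mittagLefflerTwo hα hb).comp (continuous_rpow_const hα.le).neg
  exact (continuousOn_id.rpow_const fun s hs => Or.inl (ne_of_gt hs)).mul hc.continuousOn

lemma integrableOn_fracKernel_mul_volterraSol {a α b t : ℝ} (ha : 0 < a) (hα : 0 < α)
    (hb : 0 < b) (ht : 0 < t) :
    IntegrableOn (fun s => fracKernel a (t - s) * volterraSol α b s) (Set.Ioc 0 t) := by
  have hc : Continuous fun s : ℝ => Real.Gamma b * mittagLefflerTwo α b (-s ^ α) :=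
    ((continuous_mittagLefflerTwo hα hb).comp (continuous_rpow_const hα.le).neg).const_mul _
  have hi := integrableOn_fracKernel_mul_fracKernel ha hb ht
  rw [← integrableOn_Icc_iff_integrableOn_Ioc] at hi ⊢
  refine (hi.mul_continuousOn hc.continuousOn isCompact_Icc).congr_fun (fun s _ => ?_)
    measurableSet_Icc
  have := (Real.Gamma_pos_of_pos hb).ne'
  simp only [fracKernel, volterraSol]
  field_simp

lemma integral_fracKernel_mul_volterraSol {a α b t : ℝ} (ha : 0 < a) (hα : 0 < α)
    (hb : 0 < b) (ht : 0 < t) :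
    ∫ s in Set.Ioc 0 t, fracKernel a (t - s) * volterraSol α b s = volterraSol α (a + b) t := by
  have hbk (k : ℕ) : 0 < b + k * α := by positivity
  have hterm (k : ℕ) :
      ∫ s in Set.Ioc 0 t, fracKernel a (t - s) * ((-1) ^ k * fracKernel (b + k * α) s)
        = (-1) ^ k * fracKernel (a + b + k * α) t := by
    rw [add_assoc, ← integral_fracKernel_mul_fracKernel ha (hbk k) ht, ← integral_const_mul]
    congr 1 with s
    ring
  have hnorm (k : ℕ) :
      ∫ s in Set.Ioc 0 t, ‖fracKernel a (t - s) * ((-1) ^ k * fracKernel (b + k * α) s)‖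
        = ‖(-1 : ℝ) ^ k * fracKernel (a + b + k * α) t‖ := by
    have hpos : 0 < fracKernel (a + (b + k * α)) t := fracKernel_pos (add_pos ha (hbk k)) ht
    rw [add_assoc, norm_mul, norm_pow, norm_neg, norm_one, one_pow, one_mul,
      Real.norm_of_nonneg hpos.le, ← integral_fracKernel_mul_fracKernel ha (hbk k) ht]
    refine setIntegral_congr_fun measurableSet_Ioc fun s hs => ?_
    simp only [norm_mul, norm_pow, norm_neg, norm_one, one_pow, one_mul]
    rw [Real.norm_of_nonneg (fracKernel_nonneg ha (sub_nonneg.2 hs.2)),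
      Real.norm_of_nonneg (fracKernel_nonneg (hbk k) hs.1.le)]
  have hint (k : ℕ) : Integrable
      (fun s => fracKernel a (t - s) * ((-1) ^ k * fracKernel (b + k * α) s))
      (volume.restrict (Set.Ioc 0 t)) := by
    refine ((integrableOn_fracKernel_mul_fracKernel ha (hbk k) ht).const_mul ((-1) ^ k)).congr ?_
    filter_upwards with s
    ring
  have hsum := hasSum_volterraSol hα (add_pos ha hb) ht
  have h := hasSum_integral_of_summable_integral_norm hint
    (by simp only [hnorm]; exact hsum.summable.norm)
  simp only [hterm] at h
  rw [← h.unique hsum]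
  refine setIntegral_congr_fun measurableSet_Ioc fun s hs => ?_
  exact ((hasSum_volterraSol hα hb hs.1).mul_left _).tsum_eq.symm

lemma integral_fracKernel_sub {α t₀ t₁ : ℝ} (hα : 0 < α) (h : t₀ ≤ t₁) :
    ∫ s in Set.Ioc t₀ t₁, fracKernel α (t₁ - s) = fracKernel (α + 1) (t₁ - t₀) := by
  rw [← intervalIntegral.integral_of_le h,
    intervalIntegral.integral_comp_sub_left (fun s => fracKernel α s) t₁, sub_self]
  simp only [fracKernel]
  rw [intervalIntegral.integral_div, integral_rpow (Or.inl (by linarith)), sub_add_cancel,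
    zero_rpow hα.ne', Real.Gamma_add_one hα.ne', add_sub_cancel_right, sub_zero, div_div]

lemma integrableOn_fracKernel_sub {α t₀ t₁ : ℝ} (hα : 0 < α) (h : t₀ < t₁) :
    IntegrableOn (fun s => fracKernel α (t₁ - s)) (Set.Ioc t₀ t₁) := by
  refine Integrable.of_integral_ne_zero ?_
  rw [integral_fracKernel_sub hα h.le]
  exact (fracKernel_pos (by linarith) (sub_pos.2 h)).ne'

lemma fracKernel_sub_mul_le {α b s t₀ t₁ : ℝ} (hα : 0 < α) (hα1 : α < 1) (hb : α ≤ b)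
    (hs : 0 < s) (hs₀ : s < t₀) (h : t₀ ≤ t₁) :
    fracKernel α (t₁ - s) * fracKernel b t₀ ≤ fracKernel b t₁ * fracKernel α (t₀ - s) := by
  have ht₀ : 0 < t₀ := hs.trans hs₀
  have ht₁ : 0 < t₁ := ht₀.trans_le h
  have h₀ : 0 < t₀ - s := sub_pos.2 hs₀
  have h₁ : 0 < t₁ - s := by linarith
  have hΓα := Real.Gamma_pos_of_pos hα
  have hΓb := Real.Gamma_pos_of_pos (hα.trans_le hb)
  have hdecr : ((t₁ - s) * t₀) ^ (α - 1) ≤ (t₁ * (t₀ - s)) ^ (α - 1) :=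
    rpow_le_rpow_of_nonpos (by positivity) (by nlinarith) (by linarith)
  have hincr : t₀ ^ (b - α) ≤ t₁ ^ (b - α) := rpow_le_rpow ht₀.le h (by linarith)
  have hmul := mul_le_mul hdecr hincr (by positivity) (by positivity)
  rw [mul_rpow h₁.le ht₀.le, mul_rpow ht₁.le h₀.le, mul_assoc, ← rpow_add ht₀,
    mul_right_comm, ← rpow_add ht₁, show α - 1 + (b - α) = b - 1 by ring] at hmul
  simp only [fracKernel]
  rw [div_mul_div_comm, div_mul_div_comm, mul_comm (Real.Gamma b)]
  gcongr

lemma eventually_volterraSol_pos {α b : ℝ} (hα : 0 < α) (hb : 0 < b) :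
    ∃ ε > 0, ∀ s, 0 < s → s < ε → 0 < volterraSol α b s := by
  have hc : Continuous fun s : ℝ => mittagLefflerTwo α b (-s ^ α) :=
    (continuous_mittagLefflerTwo hα hb).comp (continuous_rpow_const hα.le).neg
  have h0 : 0 < mittagLefflerTwo α b (-(0 : ℝ) ^ α) := by
    rw [zero_rpow hα.ne', neg_zero, mittagLefflerTwo_zero]
    exact inv_pos.2 (Real.Gamma_pos_of_pos hb)
  obtain ⟨ε, hε, h⟩ := Metric.eventually_nhds_iff.1 (hc.continuousAt.eventually_const_lt h0)
  refine ⟨ε, hε, fun s hs hsε => mul_pos (rpow_pos_of_pos hs _) (h ?_)⟩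
  rwa [Real.dist_eq, sub_zero, abs_of_pos hs]

/-- A solution positive before `t₁` cannot vanish at `t₁`. -/
lemma volterraSol_pos_of_forall_lt {α b t₁ : ℝ} (hα : 0 < α) (hα1 : α < 1) (hb : α ≤ b)
    (ht₁ : 0 < t₁) (hpos : ∀ s, 0 < s → s < t₁ → 0 < volterraSol α b s) :
    0 < volterraSol α b t₁ := by
  have hb0 : 0 < b := hα.trans_le hb
  by_contra! hle
  have hΓ : 0 < Real.Gamma (α + 1) := Real.Gamma_pos_of_pos (by linarith)
  -- a step `δ` over which the kernel has mass less than one half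
  obtain ⟨δ, hδ, hδt, hδΓ⟩ : ∃ δ, 0 < δ ∧ δ ≤ t₁ / 2 ∧ δ ^ α / Real.Gamma (α + 1) < 1 / 2 := by
    have hc : ContinuousAt (fun d : ℝ => d ^ α / Real.Gamma (α + 1)) 0 :=
      ((continuous_rpow_const hα.le).div_const _).continuousAt
    have h0 : (fun d : ℝ => d ^ α / Real.Gamma (α + 1)) 0 < 1 / 2 := by
      simp [zero_rpow hα.ne']
    obtain ⟨ε, hε, h⟩ := Metric.eventually_nhds_iff.1 (hc.eventually_lt_const h0)
    refine ⟨min (ε / 2) (t₁ / 2), by positivity, min_le_right _ _, h ?_⟩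
    rw [Real.dist_eq, sub_zero, abs_of_pos (by positivity)]
    exact (min_le_left _ _).trans_lt (by linarith)
  obtain ⟨t₀, ht₀, hmax⟩ := isCompact_Icc.exists_isMaxOn (Set.nonempty_Icc.2 (by linarith))
    ((continuousOn_volterraSol hα hb0).mono fun s (hs : s ∈ Set.Icc (t₁ - δ) t₁) =>
      show 0 < s by linarith [hs.1])
  have hm : 0 < volterraSol α b t₀ :=
    (hpos (t₁ - δ) (by linarith) (by linarith)).trans_le
      (hmax (Set.left_mem_Icc.2 (by linarith)))
  have hlt : t₀ < t₁ := lt_of_le_of_ne ht₀.2 (by rintro rfl; linarith)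
  have ht₀pos : 0 < t₀ := by linarith [ht₀.1]
  set m := volterraSol α b t₀
  have hg₀ := fracKernel_pos hb0 ht₀pos
  have hi₁ := integrableOn_fracKernel_mul_volterraSol hα hα hb0 ht₁
  have hsplit : Set.Ioc 0 t₀ ∪ Set.Ioc t₀ t₁ = Set.Ioc 0 t₁ :=
    Set.Ioc_union_Ioc_eq_Ioc ht₀pos.le hlt.le
  have hi₁a := hi₁.mono_set (hsplit ▸ Set.subset_union_left)
  have hi₁b := hi₁.mono_set (hsplit ▸ Set.subset_union_right)
  have hI₀ : ∫ s in Set.Ioc 0 t₀, fracKernel α (t₀ - s) * volterraSol α b s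
      = fracKernel b t₀ - m := by
    rw [integral_fracKernel_mul_volterraSol hα hα hb0 ht₀pos]
    linarith [volterraSol_eq_sub hα hb0 ht₀pos]
  have hI₁ : fracKernel b t₁
      ≤ ∫ s in Set.Ioc 0 t₁, fracKernel α (t₁ - s) * volterraSol α b s := by
    rw [integral_fracKernel_mul_volterraSol hα hα hb0 ht₁]
    linarith [volterraSol_eq_sub hα hb0 ht₁]
  rw [← hsplit, setIntegral_union (Set.Ioc_disjoint_Ioc_of_le le_rfl) measurableSet_Ioc
    hi₁a hi₁b] at hI₁
  have hA : ∫ s in Set.Ioc 0 t₀, fracKernel α (t₁ - s) * volterraSol α b s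
      ≤ fracKernel b t₁ / fracKernel b t₀ * (fracKernel b t₀ - m) := by
    rw [← hI₀, ← integral_const_mul, integral_Ioc_eq_integral_Ioo, integral_Ioc_eq_integral_Ioo]
    refine setIntegral_mono_on (hi₁a.mono_set Set.Ioo_subset_Ioc_self)
      (((integrableOn_fracKernel_mul_volterraSol hα hα hb0 ht₀pos).mono_set
        Set.Ioo_subset_Ioc_self).const_mul _) measurableSet_Ioo fun s hs => ?_
    rw [← mul_assoc]
    refine mul_le_mul_of_nonneg_right ?_ (hpos s hs.1 (hs.2.trans hlt)).le
    rw [div_mul_eq_mul_div, le_div_iff₀ hg₀]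
    exact fracKernel_sub_mul_le hα hα1 hb hs.1 hs.2 hlt.le
  have hB : ∫ s in Set.Ioc t₀ t₁, fracKernel α (t₁ - s) * volterraSol α b s
      ≤ fracKernel (α + 1) (t₁ - t₀) * m := by
    rw [← integral_fracKernel_sub hα hlt.le, ← integral_mul_const]
    refine setIntegral_mono_on hi₁b ((integrableOn_fracKernel_sub hα hlt).mul_const _)
      measurableSet_Ioc fun s hs => ?_
    exact mul_le_mul_of_nonneg_left (hmax ⟨ht₀.1.trans hs.1.le, hs.2⟩)
      (fracKernel_nonneg hα (sub_nonneg.2 hs.2))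
  have hC : fracKernel (α + 1) (t₁ - t₀) < 1 / 2 := by
    refine lt_of_le_of_lt ?_ hδΓ
    rw [fracKernel, add_sub_cancel_right]
    gcongr
    linarith [ht₀.1]
  have hD : 1 / 2 ≤ fracKernel b t₁ / fracKernel b t₀ := by
    have hΓb := Real.Gamma_pos_of_pos hb0
    rw [fracKernel, fracKernel, div_div_div_cancel_right₀ hΓb.ne', ← div_rpow ht₁.le ht₀pos.le]
    have h1 : 1 ≤ t₁ / t₀ := (one_le_div ht₀pos).2 hlt.le
    calc (1 / 2 : ℝ) ≤ (t₁ / t₀) ^ (-1 : ℝ) := by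
          rw [rpow_neg_one, inv_div, div_le_div_iff₀ two_pos ht₁]
          linarith [ht₀.1]
      _ ≤ (t₁ / t₀) ^ (b - 1) := rpow_le_rpow_of_exponent_le h1 (by linarith)
  have hE : fracKernel b t₁ / fracKernel b t₀ * (fracKernel b t₀ - m)
      = fracKernel b t₁ - fracKernel b t₁ / fracKernel b t₀ * m := by
    field_simp
  nlinarith

lemma volterraSol_pos {α b s : ℝ} (hα : 0 < α) (hα1 : α < 1) (hb : α ≤ b) (hs : 0 < s) :
    0 < volterraSol α b s := by
  have hb0 : 0 < b := hα.trans_le hb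
  obtain ⟨ε, hε, hnear⟩ := eventually_volterraSol_pos hα hb0
  by_contra! hle
  have hεs : ε ≤ s := by
    by_contra! h
    exact (hnear s hs h).not_ge hle
  have hcont : ContinuousOn (volterraSol α b) (Set.Icc ε s) :=
    (continuousOn_volterraSol hα hb0).mono fun r hr => hε.trans_le hr.1
  have hclosed : IsClosed (Set.Icc ε s ∩ volterraSol α b ⁻¹' Set.Iic 0) :=
    hcont.preimage_isClosed_of_isClosed isClosed_Icc isClosed_Iic
  obtain ⟨t₁, ⟨⟨ht₁, hle₁⟩, hleast⟩⟩ :=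
    (isCompact_Icc.of_isClosed_subset hclosed Set.inter_subset_left).exists_isLeast
      ⟨s, ⟨hεs, le_rfl⟩, hle⟩
  refine (volterraSol_pos_of_forall_lt hα hα1 hb (hε.trans_le ht₁.1) fun r hr hrt => ?_).not_ge hle₁
  by_contra! hr0
  have hεr : ε ≤ r := by
    by_contra! h
    exact (hnear r hr h).not_ge hr0
  exact hrt.not_ge (hleast ⟨⟨hεr, hrt.le.trans ht₁.2⟩, hr0⟩)

lemma volterraSol_one_antitoneOn {α : ℝ} (hα : 0 < α) (hα1 : α < 1) :
    AntitoneOn (volterraSol α 1) (Set.Ioi 0) := by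
  intro s hs r hr hsr
  have hprim {t : ℝ} (ht : 0 < t) :
      volterraSol α 1 t = 1 - ∫ y in Set.Ioc 0 t, volterraSol α α y := by
    have h := integral_fracKernel_mul_volterraSol one_pos hα hα ht
    simp only [fracKernel_one, one_mul] at h
    rw [h, volterraSol_eq_sub hα one_pos ht, fracKernel_one, add_comm]
  have hint := integrableOn_fracKernel_mul_volterraSol one_pos hα hα hr
  simp only [fracKernel_one, one_mul] at hint
  rw [hprim hs, hprim hr]
  refine sub_le_sub_left (setIntegral_mono_set hint ?_
    (Set.Ioc_subset_Ioc_right hsr).eventuallyLE) 1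
  filter_upwards [ae_restrict_mem measurableSet_Ioc] with y hy
  exact (volterraSol_pos hα hα1 le_rfl hy.1).le

lemma volterraSol_one_le {α t : ℝ} (hα : 0 < α) (hα1 : α < 1) (ht : 0 < t) :
    volterraSol α 1 t ≤ Real.Gamma (α + 1) / t ^ α := by
  have hΓ : 0 < Real.Gamma (α + 1) := Real.Gamma_pos_of_pos (by linarith)
  have h1 : volterraSol α (α + 1) t ≤ 1 := by
    have := volterraSol_eq_sub hα one_pos ht
    rw [fracKernel_one] at this
    linarith [volterraSol_pos hα hα1 hα1.le ht]
  have h2 : fracKernel (α + 1) t * volterraSol α 1 t ≤ volterraSol α (α + 1) t := by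
    rw [← integral_fracKernel_mul_volterraSol hα hα one_pos ht]
    nth_rewrite 1 [← sub_zero t]
    rw [← integral_fracKernel_sub hα ht.le, ← integral_mul_const]
    refine setIntegral_mono_on ((integrableOn_fracKernel_sub hα ht).mul_const _)
      (integrableOn_fracKernel_mul_volterraSol hα hα one_pos ht) measurableSet_Ioc fun s hs => ?_
    exact mul_le_mul_of_nonneg_left (volterraSol_one_antitoneOn hα hα1 hs.1 ht hs.2)
      (fracKernel_nonneg hα (sub_nonneg.2 hs.2))
  have h3 := h2.trans h1
  rw [fracKernel, add_sub_cancel_right, div_mul_eq_mul_div, div_le_one hΓ] at h3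
  rw [le_div_iff₀ (rpow_pos_of_pos ht _)]
  linarith

/-- For `0 < α < 1`, `E_α` decays like `1 / r` at `-∞`. -/
lemma abs_mittagLeffler_neg_le {α r : ℝ} (hα : 0 < α) (hα1 : α < 1) (hr : 0 < r) :
    |mittagLeffler α (-r)| ≤ Real.Gamma (α + 1) / r := by
  have hpow : (r ^ α⁻¹) ^ α = r := by
    rw [← rpow_mul hr.le, inv_mul_cancel₀ hα.ne', rpow_one]
  have hs : 0 < r ^ α⁻¹ := rpow_pos_of_pos hr _
  have heq : mittagLeffler α (-r) = volterraSol α 1 (r ^ α⁻¹) := by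
    rw [volterraSol, hpow, sub_self, rpow_zero, one_mul]
    rfl
  rw [heq, abs_of_pos (volterraSol_pos hα hα1 hα1.le hs)]
  simpa only [hpow] using volterraSol_one_le hα hα1 hs

lemma integrableOn_mittagLeffler_mul_cos {α c : ℝ} (hα : 0 < α) (hα1 : α < 1) (hc : 0 < c)
    (x : ℝ) :
    IntegrableOn (fun ξ : ℝ => mittagLeffler α ((1 - ξ ^ 2) * c) * Real.cos (x * ξ))
      (Set.Ioi 0) := by
  have hcont : Continuous fun ξ : ℝ => mittagLeffler α ((1 - ξ ^ 2) * c) * Real.cos (x * ξ) :=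
    ((continuous_mittagLefflerTwo hα one_pos).comp
      (show Continuous fun ξ : ℝ => (1 - ξ ^ 2) * c by fun_prop)).mul (by fun_prop)
  have hΓ : 0 < Real.Gamma (α + 1) := Real.Gamma_pos_of_pos (by linarith)
  rw [← Set.Ioc_union_Ioi_eq_Ioi (zero_le_two (α := ℝ))]
  refine (hcont.integrableOn_Ioc).union ?_
  refine Integrable.mono' ((integrable_inv_one_add_sq.const_mul
    (2 * Real.Gamma (α + 1) / c)).integrableOn (s := Set.Ioi 2))
    hcont.aestronglyMeasurable ?_
  filter_upwards [ae_restrict_mem measurableSet_Ioi] with ξ hξ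
  have hξ2 : 4 < ξ ^ 2 := by nlinarith [Set.mem_Ioi.1 hξ]
  have hr : 0 < (ξ ^ 2 - 1) * c := mul_pos (by linarith) hc
  have hdecay := abs_mittagLeffler_neg_le hα hα1 hr
  rw [show -((ξ ^ 2 - 1) * c) = (1 - ξ ^ 2) * c by ring] at hdecay
  rw [norm_mul, Real.norm_eq_abs, Real.norm_eq_abs]
  calc |mittagLeffler α ((1 - ξ ^ 2) * c)| * |Real.cos (x * ξ)|
      ≤ Real.Gamma (α + 1) / ((ξ ^ 2 - 1) * c) * 1 := by
        gcongr
        exact Real.abs_cos_le_one _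
    _ ≤ 2 * Real.Gamma (α + 1) / c * (1 + ξ ^ 2)⁻¹ := by
        rw [mul_one, ← div_eq_mul_inv, div_div, div_le_div_iff₀ hr (by positivity)]
        nlinarith [mul_pos hΓ hc]

lemma sum_aCoeff_eq_integral {α t x : ℝ} (hx : 0 < x)
    (hint : IntegrableOn
      (fun ξ : ℝ => mittagLeffler α ((1 - ξ ^ 2) * t ^ α) * Real.cos (x * ξ)) (Set.Ioi 0))
    (n : ℕ) :
    ∑ k ∈ Finset.range (n + 1), (-1 : ℝ) ^ k * aCoeff α t x k
      = ∫ ξ in (0 : ℝ)..(π * (2 * (n : ℝ) + 1) / (2 * x)),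
          mittagLeffler α ((1 - ξ ^ 2) * t ^ α) * Real.cos (x * ξ) := by
  have hii {a b : ℝ} (ha : 0 ≤ a) (hab : a ≤ b) : IntervalIntegrable
      (fun ξ : ℝ => mittagLeffler α ((1 - ξ ^ 2) * t ^ α) * Real.cos (x * ξ)) volume a b :=
    (intervalIntegrable_iff_integrableOn_Ioc_of_le hab).2
      (hint.mono_set fun ξ hξ => ha.trans_lt hξ.1)
  induction n with
  | zero => simp [aCoeff]
  | succ n ih =>
    rw [Finset.sum_range_succ, ih, aCoeff, if_neg (Nat.succ_ne_zero n), ← mul_assoc, ← mul_pow,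
      neg_one_mul, neg_neg, one_pow, one_mul]
    push_cast
    rw [show 2 * ((n : ℝ) + 1) - 1 = 2 * n + 1 by ring]
    refine intervalIntegral.integral_add_adjacent_intervals
      (hii le_rfl (by positivity)) (hii (by positivity) ?_)
    gcongr
    linarith

theorem integral_eq_alternating_sum (α t x : ℝ) (hα : 0 < α) (hα1 : α < 1) (ht : 0 < t)
    (hx : 0 < x) :
    IntegrableOn (fun ξ : ℝ => mittagLeffler α ((1 - ξ ^ 2) * t ^ α) * Real.cos (x * ξ))
      (Set.Ioi 0) ∧
    ∃ S : ℝ,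
      Filter.Tendsto (fun n : ℕ => ∑ k ∈ Finset.range n, (-1 : ℝ) ^ k * aCoeff α t x k)
        Filter.atTop (nhds S) ∧
      (∫ ξ in Set.Ioi (0 : ℝ),
          mittagLeffler α ((1 - ξ ^ 2) * t ^ α) * Real.cos (x * ξ)) = S := by
  have hint := integrableOn_mittagLeffler_mul_cos hα hα1 (rpow_pos_of_pos ht α) x
  refine ⟨hint, _, ?_, rfl⟩
  rw [← Filter.tendsto_add_atTop_iff_nat 1]
  simp only [sum_aCoeff_eq_integral hx hint]
  refine intervalIntegral_tendsto_integral_Ioi 0 hint ?_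
  refine Filter.Tendsto.atTop_div_const (by positivity)
    (Filter.Tendsto.const_mul_atTop pi_pos (Filter.tendsto_atTop_add_const_right _ _ ?_))
  exact tendsto_natCast_atTop_atTop.const_mul_atTop two_pos
end

section
/- Let 0 < α < 1, t > 0, and let ℓ, x satisfy 0 < ℓ < π/2 < x. Then a_0(x,t) ≥ (x·cos ℓ/(2ℓ)) · ∫_{1−ℓ²/x²}^{1} E_α(t^α ρ) dρ. -/
open Real MeasureTheory

/-- Restricting Euler's integral to `(M, ∞)` bounds `Γ (1 + s)` from below by `e^{-M} M^s`. -/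
lemma exp_neg_mul_rpow_le_Gamma {M s : ℝ} (hM : 0 < M) (hs : 0 ≤ s) :
    Real.exp (-M) * M ^ s ≤ Real.Gamma (1 + s) := by
  have hpos : 0 < 1 + s := by linarith
  have hint := Real.GammaIntegral_convergent hpos
  have hsub : Set.Ioi M ⊆ Set.Ioi (0 : ℝ) := Set.Ioi_subset_Ioi hM.le
  rw [Real.Gamma_eq_integral hpos, ← integral_exp_neg_Ioi M, ← integral_mul_const]
  calc ∫ u in Set.Ioi M, Real.exp (-u) * M ^ s
      ≤ ∫ u in Set.Ioi M, Real.exp (-u) * u ^ (1 + s - 1) := by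
        refine setIntegral_mono_on ((integrableOn_exp_neg_Ioi M).mul_const _)
          (hint.mono_set hsub) measurableSet_Ioi fun u hu => ?_
        rw [add_sub_cancel_left]
        have hu' : M ≤ u := le_of_lt hu
        gcongr
    _ ≤ ∫ u in Set.Ioi 0, Real.exp (-u) * u ^ (1 + s - 1) := by
        refine setIntegral_mono_set hint ?_ hsub.eventuallyLE
        filter_upwards [ae_restrict_mem measurableSet_Ioi] with u hu
        have hu' : (0 : ℝ) < u := hu
        simp only [Pi.zero_apply]
        positivity

lemma continuous_mittagLeffler {α : ℝ} (hα : 0 < α) : Continuous (mittagLeffler α) := by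
  rw [continuous_iff_continuousAt]
  intro r
  obtain ⟨R, hR, hrR⟩ : ∃ R : ℝ, 0 < R ∧ |r| < R := ⟨|r| + 1, by positivity, by linarith⟩
  have hr : r ∈ Set.Ioo (-R) R := abs_lt.mp hrR
  have hM : 0 < (2 * R) ^ α⁻¹ := by positivity
  have hpow : ∀ k : ℕ, ((2 * R) ^ α⁻¹) ^ ((k : ℝ) * α) = (2 * R) ^ k := fun k => by
    rw [← Real.rpow_mul (by positivity), mul_comm (k : ℝ) α, inv_mul_cancel_left₀ hα.ne',
      Real.rpow_natCast]
  have hcont : ContinuousOn (mittagLeffler α) (Set.Ioo (-R) R) := by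
    refine continuousOn_tsum (u := fun k : ℕ => Real.exp ((2 * R) ^ α⁻¹) * (1 / 2 : ℝ) ^ k)
      (fun k => by fun_prop) (summable_geometric_two.mul_left _) fun k y hy => ?_
    have hΓ := exp_neg_mul_rpow_le_Gamma hM (by positivity : 0 ≤ (k : ℝ) * α)
    rw [hpow] at hΓ
    have hlow : 0 < Real.exp (-(2 * R) ^ α⁻¹) * (2 * R) ^ k := by positivity
    have hy' : |y| ≤ R := (abs_lt.mpr hy).le
    rw [norm_div, norm_pow, Real.norm_eq_abs, Real.norm_of_nonneg (hlow.le.trans hΓ)]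
    calc |y| ^ k / Real.Gamma (1 + k * α)
        ≤ R ^ k / (Real.exp (-(2 * R) ^ α⁻¹) * (2 * R) ^ k) := by gcongr
      _ = Real.exp ((2 * R) ^ α⁻¹) * (1 / 2 : ℝ) ^ k := by
        rw [Real.exp_neg, mul_pow, div_pow, one_pow]
        field_simp
  exact hcont.continuousAt (Ioo_mem_nhds hr.1 hr.2)

lemma mittagLeffler_nonneg {α r : ℝ} (hα : 0 ≤ α) (hr : 0 ≤ r) : 0 ≤ mittagLeffler α r :=
  tsum_nonneg fun _ => div_nonneg (pow_nonneg hr _) (Real.Gamma_pos_of_pos (by positivity)).le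

/-- The substitution `ρ = 1 - ξ ^ 2`. -/
lemma integral_one_sub_sq_eq {g : ℝ → ℝ} (hg : Continuous g) (c : ℝ) :
    ∫ ρ in (1 - c ^ 2)..(1 : ℝ), g ρ = ∫ ξ in (0 : ℝ)..c, g (1 - ξ ^ 2) * (2 * ξ) := by
  have hderiv : ∀ ξ ∈ Set.uIcc 0 c, HasDerivAt (fun ξ : ℝ => 1 - ξ ^ 2) (-(2 * ξ)) ξ :=
    fun ξ _ => by simpa using (hasDerivAt_pow 2 ξ).const_sub 1
  have h := intervalIntegral.integral_comp_mul_deriv hderiv (by fun_prop) hg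
  simp only [Function.comp_apply, mul_neg, intervalIntegral.integral_neg] at h
  rw [intervalIntegral.integral_symm, neg_eq_iff_eq_neg, h]
  simp

theorem aCoeff_zero_lower_bound (α t x ℓ : ℝ) (hα : 0 < α) (hα1 : α < 1) (ht : 0 < t)
    (hℓ : 0 < ℓ) (hℓπ : ℓ < π / 2) (hx : π / 2 < x) :
    aCoeff α t x 0 ≥
      (x * Real.cos ℓ / (2 * ℓ)) *
        ∫ ρ in (1 - ℓ ^ 2 / x ^ 2)..(1 : ℝ), mittagLeffler α (t ^ α * ρ) := by
  have hx0 : 0 < x := by linarith [Real.pi_pos]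
  have hcos : 0 < Real.cos ℓ := Real.cos_pos_of_mem_Ioo ⟨by linarith, hℓπ⟩
  have hE : Continuous fun ρ => mittagLeffler α (t ^ α * ρ) :=
    (continuous_mittagLeffler hα).comp (by fun_prop)
  have hEξ : Continuous fun ξ : ℝ => mittagLeffler α (t ^ α * (1 - ξ ^ 2)) :=
    hE.comp (by fun_prop)
  have hcut : ℓ / x ≤ π / (2 * x) := by
    rw [div_le_div_iff₀ hx0 (by positivity)]
    nlinarith
  have hend : π / (2 * x) ≤ 1 := by
    rw [div_le_one (by positivity)]
    linarith
  have hnonneg : ∀ ξ ∈ Set.Icc 0 (π / (2 * x)), 0 ≤ mittagLeffler α (t ^ α * (1 - ξ ^ 2)) :=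
    fun ξ hξ => mittagLeffler_nonneg hα.le
      (mul_nonneg (by positivity) (by nlinarith [hξ.1, hξ.2.trans hend]))
  rw [ge_iff_le, aCoeff, if_pos rfl, ← div_pow, integral_one_sub_sq_eq hE,
    ← intervalIntegral.integral_const_mul]
  simp only [mul_comm _ (t ^ α)]
  calc ∫ ξ in (0 : ℝ)..ℓ / x,
        x * Real.cos ℓ / (2 * ℓ) * (mittagLeffler α (t ^ α * (1 - ξ ^ 2)) * (2 * ξ))
      ≤ ∫ ξ in (0 : ℝ)..ℓ / x, mittagLeffler α (t ^ α * (1 - ξ ^ 2)) * Real.cos (x * ξ) := by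
        refine intervalIntegral.integral_mono_on (by positivity)
          (Continuous.intervalIntegrable (by fun_prop) _ _)
          (Continuous.intervalIntegrable (by fun_prop) _ _) fun ξ hξ => ?_
        have hxξ : x * ξ ≤ ℓ := by
          rw [mul_comm]
          exact (le_div_iff₀ hx0).mp hξ.2
        have hcos_le : Real.cos ℓ ≤ Real.cos (x * ξ) :=
          Real.cos_le_cos_of_nonneg_of_le_pi (mul_nonneg hx0.le hξ.1) (by linarith) hxξ
        have hweight : x * ξ / ℓ * Real.cos ℓ ≤ Real.cos (x * ξ) :=
          (mul_le_of_le_one_left hcos.le ((div_le_one hℓ).mpr hxξ)).trans hcos_le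
        calc x * Real.cos ℓ / (2 * ℓ) * (mittagLeffler α (t ^ α * (1 - ξ ^ 2)) * (2 * ξ))
            = mittagLeffler α (t ^ α * (1 - ξ ^ 2)) * (x * ξ / ℓ * Real.cos ℓ) := by
              field_simp
          _ ≤ _ := mul_le_mul_of_nonneg_left hweight (hnonneg ξ ⟨hξ.1, hξ.2.trans hcut⟩)
    _ ≤ ∫ ξ in (0 : ℝ)..π / (2 * x),
        mittagLeffler α (t ^ α * (1 - ξ ^ 2)) * Real.cos (x * ξ) := by
        refine intervalIntegral.integral_mono_interval le_rfl (by positivity) hcut ?_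
          (Continuous.intervalIntegrable (by fun_prop) _ _)
        filter_upwards [ae_restrict_mem measurableSet_Ioc] with ξ hξ
        have hxξ : x * ξ ≤ π / 2 := by
          have := (le_div_iff₀ (by positivity)).mp hξ.2
          linarith
        exact mul_nonneg (hnonneg ξ ⟨hξ.1.le, hξ.2⟩) (Real.cos_nonneg_of_neg_pi_div_two_le_of_le
          (by linarith [Real.pi_pos, mul_pos hx0 hξ.1]) hxξ)
end
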